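/- Let A ∈ M_n(ℤ) be non-singular with h_A irreducible over ℚ and P'(A) ≠ ∅, and assume there exists a prime p with gcd(n, t_p) = 1. Then every matrix T ∈ M_n(ℚ) with T·x ∈ G_A for all x ∈ G_A commutes with A, i.e., T·A = A·T. -/

import Mathlib

open Matrix Polynomial

noncomputable section

/-- The matrix `A` viewed over `ℚ`. -/
def Aq {n : ℕ} (A : Matrix (Fin n) (Fin n) ℤ) : Matrix (Fin n) (Fin n) ℚ :=
  A.map (Int.cast : ℤ → ℚ)

/-- The group `G_A = {A^k x : x ∈ ℤ^n, k ∈ ℤ} ⊆ ℚ^n`. -/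
def GA {n : ℕ} (A : Matrix (Fin n) (Fin n) ℤ) : Set (Fin n → ℚ) :=
  {v | ∃ (k : ℤ) (x : Fin n → ℤ), v = (Aq A ^ k) *ᵥ fun i => ((x i : ℚ))}

/-- `P'(A)`: primes dividing `det A` such that `h_A ≢ x^n (mod p)`. -/
def Pbad {n : ℕ} (A : Matrix (Fin n) (Fin n) ℤ) : Set ℕ :=
  {p | p.Prime ∧ (p : ℤ) ∣ A.det ∧ A.charpoly.map (Int.castRingHom (ZMod p)) ≠ X ^ n}

/-- `t_p`: multiplicity of `0` as a root of `h_A` mod `p`. -/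
def tp {n : ℕ} (A : Matrix (Fin n) (Fin n) ℤ) (p : ℕ) : ℕ :=
  Polynomial.rootMultiplicity 0 (A.charpoly.map (Int.castRingHom (ZMod p)))

/-!
Pass to a splitting field `L` of `h_A`, with a valuation `v` over `p`. In an eigenbasis of `A` over
`L` the claim is that `T` is diagonal. Stability of `G_A` means that for every `k` some `A ^ m * T`
is an integral matrix times `A ^ k`; comparing valuations as `k → ∞`, the entry of `T` from the
`y`-eigenline to the `x`-eigenline vanishes whenever `v y < 1 ≤ v x`. As `T` is rational, it also
vanishes if this holds for some conjugate pair `(σ x, σ y)`. So a nonzero entry for roots `x ≠ y`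
forces `v (σ y) < 1 → v (σ x) < 1` for every `σ` in the Galois group, and then, since `x` and `y`
are conjugate, `{σ | v (σ x) < 1} = {σ | v (σ y) < 1}`. But the classes of roots sharing this set
are blocks of one common size for the transitive Galois action, which divides both the number `n`
of roots and the number `t_p` of roots with `v < 1`, hence is `1`.
-/

section GroupAction

open scoped Pointwise

variable {G Ω : Type*} [Group G] [MulAction G Ω] [Finite Ω]

theorem ncard_fiber_dvd_ncard_preimage [MulAction.IsPretransitive G Ω] {β : Type*} {f : Ω → β}
    (hf : ∀ (g : G) ⦃x y⦄, f x = f y → f (g • x) = f (g • y)) (a : Ω) (U : Set β) :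
    (f ⁻¹' {f a}).ncard ∣ (f ⁻¹' U).ncard := by
  classical
  have := Fintype.ofFinite Ω
  have fiber_smul (g : G) : f ⁻¹' {f (g • a)} = g • f ⁻¹' {f a} := by
    ext x
    rw [Set.mem_smul_set_iff_inv_smul_mem]
    exact ⟨fun hx => by simpa using hf g⁻¹ hx, fun hx => by simpa using hf g hx⟩
  rw [Set.ncard_eq_toFinset_card' (f ⁻¹' U), Finset.card_eq_sum_card_image f]
  refine Finset.dvd_sum fun b hb => ?_
  obtain ⟨x, hxU, rfl⟩ := Finset.mem_image.1 hb
  obtain ⟨g, rfl⟩ := MulAction.exists_smul_eq G a x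
  rw [← Set.ncard_smul_set g, ← fiber_smul, ← Set.ncard_coe_finset]
  refine dvd_of_eq (congrArg Set.ncard (Set.ext fun y => ?_))
  have hU : f (g • a) ∈ U := by simpa using hxU
  simpa using fun hy : f y = f (g • a) => hy ▸ hU

theorem smul_mem_of_smul_mem {S : Set Ω} {x : Ω} (g : G) (hS : ∀ h : G, h • x ∈ S → h • g • x ∈ S)
    {h : G} (hx : h • g • x ∈ S) : h • x ∈ S := by
  obtain ⟨m, hm, hper⟩ := (MulAction.injective (β := Ω) g).mem_periodicPts x
  have hiter (k : ℕ) : h • g ^ (k + 1) • x ∈ S := by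
    induction k with
    | zero => simpa using hx
    | succ k ih =>
      simpa [pow_succ, mul_smul] using hS (h * g ^ (k + 1)) (by simpa [mul_smul] using ih)
  have hgm : g ^ m • x = x := by
    simpa [Function.IsPeriodicPt, Function.IsFixedPt, smul_iterate] using hper
  simpa [Nat.sub_add_cancel hm, hgm] using hiter (m - 1)

theorem eq_of_forall_smul_mem [MulAction.IsPretransitive G Ω] {S : Set Ω}
    (hcop : (Nat.card Ω).Coprime S.ncard) {x y : Ω} (h : ∀ g : G, g • y ∈ S → g • x ∈ S) :
    x = y := by
  let N (z : Ω) : Set G := {g | g • z ∈ S}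
  have hN (g : G) ⦃z w : Ω⦄ (hzw : N z = N w) : N (g • z) = N (g • w) := by
    ext k
    simpa [N, mul_smul] using Set.ext_iff.1 hzw (k * g)
  have hxy : N x = N y := by
    obtain ⟨g, rfl⟩ := MulAction.exists_smul_eq G y x
    exact Set.Subset.antisymm (fun _ => smul_mem_of_smul_mem g h) h
  have hdvd_card : (N ⁻¹' {N y}).ncard ∣ Nat.card Ω := by
    simpa [Set.ncard_univ] using ncard_fiber_dvd_ncard_preimage hN y Set.univ
  have hdvd_ncard : (N ⁻¹' {N y}).ncard ∣ S.ncard := by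
    have hS : N ⁻¹' {R | 1 ∈ R} = S := by ext; simp [N]
    simpa only [hS] using ncard_fiber_dvd_ncard_preimage hN y {R | 1 ∈ R}
  have hone : (N ⁻¹' {N y}).ncard ≤ 1 := (Nat.eq_one_of_dvd_coprimes hcop hdvd_card hdvd_ncard).le
  exact (Set.ncard_le_one (Set.toFinite _)).1 hone x hxy y rfl

end GroupAction

theorem exists_algEquiv_mem_and_notMem {K L : Type*} [Field K] [Field L] [Algebra K L]
    [Normal K L] {f : K[X]} (hirr : Irreducible f) (hsplit : (f.map (algebraMap K L)).Splits)
    {S : Set L} (hcop : (f.rootSet L).ncard.Coprime (f.rootSet L ∩ S).ncard)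
    {x y : L} (hx : x ∈ f.rootSet L) (hy : y ∈ f.rootSet L) (hxy : x ≠ y) :
    ∃ σ : Gal(L/K), σ y ∈ S ∧ σ x ∉ S := by
  have : Fact (f.map (algebraMap K L)).Splits := ⟨hsplit⟩
  have := Gal.galAction_isPretransitive f L hirr
  contrapose! hxy
  have hcop' : (Nat.card (f.rootSet L)).Coprime ((↑) ⁻¹' S : Set (f.rootSet L)).ncard := by
    rwa [Nat.card_coe_set_eq, ← Set.ncard_image_of_injective _ Subtype.val_injective,
      Subtype.image_preimage_coe]
  refine congrArg Subtype.val (eq_of_forall_smul_mem (G := f.Gal) (x := ⟨x, hx⟩) (y := ⟨y, hy⟩)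
    hcop' fun g hg => ?_)
  obtain ⟨σ, rfl⟩ := Gal.restrict_surjective f L g
  simp only [Set.mem_preimage, Gal.restrict_smul] at hg ⊢
  exact hxy σ hg

section SpectralProjections

variable {K : Type*} [Field K]

theorem X_sub_C_mul_basis_eq_C_mul_nodal {ι : Type*} [DecidableEq ι] {s : Finset ι} {i : ι}
    (hi : i ∈ s) (v : ι → K) :
    (X - C (v i)) * Lagrange.basis s v i = C (Lagrange.nodalWeight s v i) * Lagrange.nodal s v := by
  rw [Lagrange.basis_eq_prod_sub_inv_mul_nodal_div hi, ← Lagrange.nodal_erase_eq_nodal_div hi,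
    Lagrange.nodal_eq_mul_nodal_erase hi]
  ring

variable {M : Type*} [Ring M] [Algebra K M] {s : Finset K} {a t : M}

theorem mul_aeval_basis [DecidableEq K] (ha : aeval a (Lagrange.nodal s id) = 0) {x : K}
    (hx : x ∈ s) :
    a * aeval a (Lagrange.basis s id x) = x • aeval a (Lagrange.basis s id x) := by
  have h := congrArg (aeval a) (X_sub_C_mul_basis_eq_C_mul_nodal hx id)
  simpa [ha, sub_mul, sub_eq_zero, ← Algebra.smul_def] using h

theorem aeval_basis_mul [DecidableEq K] (ha : aeval a (Lagrange.nodal s id) = 0) {x : K}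
    (hx : x ∈ s) :
    aeval a (Lagrange.basis s id x) * a = x • aeval a (Lagrange.basis s id x) := by
  rw [← mul_aeval_basis ha hx]
  simpa using ((Commute.all (Lagrange.basis s id x) X).map (aeval a)).eq

theorem sum_aeval_basis [DecidableEq K] (ha : aeval a (Lagrange.nodal s id) = 0) :
    ∑ x ∈ s, aeval a (Lagrange.basis s id x) = 1 := by
  rcases s.eq_empty_or_nonempty with rfl | hs
  · simpa using ha.symm
  · rw [← map_sum, Lagrange.sum_basis Function.injective_id.injOn hs, map_one]

theorem commute_of_forall_mul_mul_eq_zero (ha : aeval a (Lagrange.nodal s id) = 0)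
    (h : ∀ x ∈ s, ∀ y ∈ s, x ≠ y → ∀ e f : M, e * a = x • e → a * f = y • f → e * t * f = 0) :
    Commute t a := by
  classical
  let e (x : K) : M := aeval a (Lagrange.basis s id x)
  have left_mul (x) (hx : x ∈ s) : e x * t = e x * t * e x := calc
    e x * t = ∑ y ∈ s, e x * t * e y := by rw [← Finset.mul_sum, sum_aeval_basis ha, mul_one]
    _ = e x * t * e x := Finset.sum_eq_single_of_mem x hx fun y hy hyx =>
      h x hx y hy hyx.symm _ _ (aeval_basis_mul ha hx) (mul_aeval_basis ha hy)
  have block_diagonal : t = ∑ x ∈ s, e x * t * e x := calc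
    t = ∑ x ∈ s, e x * t := by rw [← Finset.sum_mul, sum_aeval_basis ha, one_mul]
    _ = ∑ x ∈ s, e x * t * e x := Finset.sum_congr rfl left_mul
  rw [block_diagonal]
  refine Commute.sum_left _ _ _ fun x hx => ?_
  calc
    e x * t * e x * a = x • (e x * t * e x) := by
      rw [mul_assoc, aeval_basis_mul ha hx, mul_smul_comm]
    _ = a * (e x * t * e x) := by
      rw [← mul_assoc, ← mul_assoc, mul_aeval_basis ha hx, smul_mul_assoc, smul_mul_assoc]

end SpectralProjections

theorem eq_zero_of_forall_le_pow_mul {Γ₀ : Type*} [LinearOrderedCommGroupWithZero Γ₀]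
    [MulArchimedean Γ₀] {c C q : Γ₀} (hq : q < 1) (h : ∀ k : ℕ, c ≤ q ^ k * C) : c = 0 := by
  by_contra hc
  have hc : 0 < c := zero_lt_iff.2 hc
  have hC : 0 < C := zero_lt_iff.2 fun hC => hc.not_ge (by simpa [hC] using h 0)
  obtain ⟨k, hk⟩ := exists_pow_lt₀ hq (Units.mk0 (c / C) (div_pos hc hC).ne')
  exact (h k).not_gt ((lt_div_iff₀ hC).1 hk)

section EigenMatrices

variable {ι κ μ : Type*} [Fintype ι]

theorem exists_valuation_mul_mul_le {R Γ₀ : Type*} [Ring R] [LinearOrderedCommMonoidWithZero Γ₀]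
    [Finite κ] [Finite μ] (v : Valuation R Γ₀) (F : Matrix κ ι R) (G : Matrix ι μ R) :
    ∃ C, ∀ B : Matrix ι ι R, (∀ i j, v (B i j) ≤ 1) → ∀ i j, v ((F * B * G) i j) ≤ C := by
  obtain ⟨C₁, hF⟩ := Finite.exists_le fun p : κ × ι => v (F p.1 p.2)
  obtain ⟨C₂, hG⟩ := Finite.exists_le fun p : ι × μ => v (G p.1 p.2)
  refine ⟨C₁ * C₂, fun B hB i j => ?_⟩
  have hFB (k : ι) : v ((F * B) i k) ≤ C₁ := by
    refine v.map_sum_le fun l _ => ?_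
    simpa only [map_mul, mul_one] using mul_le_mul' (hF (i, l)) (hB l k)
  refine v.map_sum_le fun k _ => ?_
  simpa only [map_mul] using mul_le_mul' (hFB k) (hG (k, j))

section Powers

variable {R : Type*} [CommSemiring R] [DecidableEq ι] {A : Matrix ι ι R} {a b : R}

theorem mul_pow_eq_pow_smul {F : Matrix κ ι R} (h : F * A = a • F) (m : ℕ) :
    F * A ^ m = a ^ m • F := by
  induction m with
  | zero => simp
  | succ m ih => rw [pow_succ, ← Matrix.mul_assoc, ih, Matrix.smul_mul, h, smul_smul, pow_succ]

theorem pow_mul_eq_pow_smul {G : Matrix ι μ R} (h : A * G = b • G) (k : ℕ) :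
    A ^ k * G = b ^ k • G := by
  induction k with
  | zero => simp
  | succ k ih => rw [pow_succ', Matrix.mul_assoc, ih, Matrix.mul_smul, h, smul_smul, pow_succ]

end Powers

theorem mul_mul_eq_zero_of_valuation {L Γ₀ : Type*} [Field L] [LinearOrderedCommGroupWithZero Γ₀]
    [MulArchimedean Γ₀] [DecidableEq ι] [Finite κ] [Finite μ] {v : Valuation L Γ₀}
    {A T : Matrix ι ι L} {F : Matrix κ ι L} {G : Matrix ι μ L} {a b : L}
    (hT : ∀ k : ℕ, ∃ (m : ℕ) (B : Matrix ι ι L), (∀ i j, v (B i j) ≤ 1) ∧ A ^ m * T = B * A ^ k)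
    (ha : 1 ≤ v a) (hb : v b < 1) (hF : F * A = a • F) (hG : A * G = b • G) : F * T * G = 0 := by
  obtain ⟨C, hC⟩ := exists_valuation_mul_mul_le v F G
  ext i j
  refine v.zero_iff.1 (eq_zero_of_forall_le_pow_mul hb (C := C) fun k => ?_)
  obtain ⟨m, B, hB, hAT⟩ := hT k
  have hscale : a ^ m • (F * T * G) = b ^ k • (F * B * G) := by
    rw [← Matrix.smul_mul, ← Matrix.smul_mul, ← mul_pow_eq_pow_smul hF, Matrix.mul_assoc F, hAT,
      ← Matrix.mul_assoc, Matrix.mul_assoc, pow_mul_eq_pow_smul hG, Matrix.mul_smul]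
  calc
    v ((F * T * G) i j) ≤ v a ^ m * v ((F * T * G) i j) := le_mul_of_one_le_left' (one_le_pow₀ ha)
    _ = v ((a ^ m • (F * T * G)) i j) := by simp
    _ = v b ^ k * v ((F * B * G) i j) := by rw [hscale]; simp
    _ ≤ v b ^ k * C := mul_le_mul_right (hC B hB i j) _

end EigenMatrices

section RootsModP

variable {L Γ₀ : Type*} [Field L] [LinearOrderedCommGroupWithZero Γ₀] (v : Valuation L Γ₀)

theorem rootMultiplicity_zero_map_residue_eq_countP {f : v.valuationSubring[X]}
    (hf : f.Monic) (hsplit : (f.map (algebraMap v.valuationSubring L)).Splits)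
    [DecidablePred fun x => v x < 1] :
    rootMultiplicity 0 (f.map (IsLocalRing.residue v.valuationSubring)) =
      (f.aroots L).countP fun x => v x < 1 := by
  classical
  have hinj : Function.Injective (algebraMap v.valuationSubring L) := Subtype.val_injective
  have hsplitO : f.Splits := by
    refine .of_splits_map_of_injective hinj hsplit fun x hx => ?_
    have hint : IsIntegral v.valuationSubring x := ⟨f, hf, by
      simpa [eval_map] using (mem_roots'.1 hx).2⟩
    exact (IsIntegrallyClosed.isIntegral_iff).1 hint
  have hmap : f.map (IsLocalRing.residue v.valuationSubring) ≠ 0 := (hf.map _).ne_zero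
  rw [← count_roots, hsplitO.roots_map_of_ne_zero hmap, aroots,
    hsplitO.roots_map_of_injective hinj, Multiset.count_map, Multiset.countP_map]
  congr 1
  refine Multiset.filter_congr fun x _ => ?_
  rw [eq_comm, IsLocalRing.residue_eq_zero_iff]
  exact Valuation.mem_maximalIdeal_iff L v

variable {v}

theorem rootMultiplicity_zero_map_zmod_eq_countP {p : ℕ} [Fact p.Prime] (hp : v p < 1) {f : ℤ[X]}
    (hf : f.Monic) (hsplit : (f.map (algebraMap ℤ L)).Splits) [DecidablePred fun x => v x < 1] :
    rootMultiplicity 0 (f.map (Int.castRingHom (ZMod p))) =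
      (f.aroots L).countP fun x => v x < 1 := by
  let O := v.valuationSubring
  have hpO : (p : IsLocalRing.ResidueField O) = 0 := by
    rw [← map_natCast (IsLocalRing.residue O), IsLocalRing.residue_eq_zero_iff]
    exact (Valuation.mem_maximalIdeal_iff L v).2 (by simpa using hp)
  have : CharP (IsLocalRing.ResidueField O) p :=
    (CharP.charP_iff_prime_eq_zero Fact.out).2 hpO
  let φ : ZMod p →+* IsLocalRing.ResidueField O := ZMod.castHom dvd_rfl _
  have hred : (f.map (Int.castRingHom (ZMod p))).map φ =
      (f.map (algebraMap ℤ O)).map (IsLocalRing.residue O) := by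
    rw [Polynomial.map_map, Polynomial.map_map]
    exact congrArg f.map (RingHom.ext_int _ _)
  have hL : (f.map (algebraMap ℤ O)).map (algebraMap O L) = f.map (algebraMap ℤ L) := by
    rw [Polynomial.map_map]
    exact congrArg f.map (RingHom.ext_int _ _)
  rw [eq_rootMultiplicity_map φ.injective, map_zero, hred,
    rootMultiplicity_zero_map_residue_eq_countP v (hf.map _) (hL ▸ hsplit), aroots, hL]

end RootsModP

theorem exists_valuation_lt_one (L : Type*) [Field L] [NumberField L] {p : ℕ} (hp : p.Prime) :
    ∃ v : Valuation L (WithZero (Multiplicative ℤ)), v p < 1 := by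
  let R := NumberField.RingOfIntegers L
  have : (Ideal.span {(p : ℤ)}).IsMaximal :=
    PrincipalIdealRing.isMaximal_of_irreducible (Nat.prime_iff_prime_int.1 hp).irreducible
  obtain ⟨P, hPmax, hPover⟩ :=
    Ideal.exists_maximal_ideal_liesOver_of_isIntegral (Ideal.span {(p : ℤ)}) (S := R)
  have hpP : (p : R) ∈ P := by
    have h := (Ideal.mem_of_liesOver P (Ideal.span {(p : ℤ)}) p).1 (Ideal.mem_span_singleton_self _)
    simpa using h
  have hP : P ≠ ⊥ := fun h => hp.ne_zero (by simpa [h] using hpP)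
  let w : IsDedekindDomain.HeightOneSpectrum R := ⟨P, hPmax.isPrime, hP⟩
  refine ⟨w.valuation L, ?_⟩
  rw [← map_natCast (algebraMap R L)]
  exact (w.valuation_lt_one_iff_mem (p : R)).2 hpP

section Conjugates

variable {K L Γ₀ ι : Type*} [Field K] [Field L] [Algebra K L] [LinearOrderedCommGroupWithZero Γ₀]
  [Fintype ι] [DecidableEq ι] {A T : Matrix ι ι K}

theorem aeval_nodal_roots_charpoly {M : Matrix ι ι L} (hsep : M.charpoly.Separable)
    (hsplit : M.charpoly.Splits) [DecidableEq L] :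
    aeval M (Lagrange.nodal M.charpoly.roots.toFinset id) = 0 := by
  have hnodal : Lagrange.nodal M.charpoly.roots.toFinset id = M.charpoly := by
    conv_rhs => rw [hsplit.eq_prod_roots_of_monic M.charpoly_monic]
    rw [Lagrange.nodal, Finset.prod, Multiset.toFinset_val, (nodup_roots hsep).dedup]
    rfl
  rw [hnodal, M.aeval_self_charpoly]

theorem ncard_rootSet_charpoly (hsep : A.charpoly.Separable)
    (hsplit : (A.charpoly.map (algebraMap K L)).Splits) :
    (A.charpoly.rootSet L).ncard = Fintype.card ι := by
  rw [← Nat.card_coe_set_eq, Nat.card_eq_fintype_card, card_rootSet_eq_natDegree hsep hsplit,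
    A.charpoly_natDegree_eq_dim]

theorem mul_map_mul_eq_zero_of_valuation [Normal K L] [MulArchimedean Γ₀] {v : Valuation L Γ₀}
    (hirr : Irreducible A.charpoly) (hsplit : (A.charpoly.map (algebraMap K L)).Splits)
    (hcop : (A.charpoly.rootSet L).ncard.Coprime (A.charpoly.rootSet L ∩ {x | v x < 1}).ncard)
    (hT : ∀ k : ℕ, ∃ (m : ℕ) (B : Matrix ι ι K),
      (∀ i j, v (algebraMap K L (B i j)) ≤ 1) ∧ A ^ m * T = B * A ^ k)
    {x y : L} (hx : x ∈ A.charpoly.rootSet L) (hy : y ∈ A.charpoly.rootSet L) (hxy : x ≠ y)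
    {E F : Matrix ι ι L} (hE : E * A.map (algebraMap K L) = x • E)
    (hF : A.map (algebraMap K L) * F = y • F) : E * T.map (algebraMap K L) * F = 0 := by
  obtain ⟨σ, hσy, hσx⟩ := exists_algEquiv_mem_and_notMem hirr hsplit hcop hx hy hxy
  have map_algebraMap (M : Matrix ι ι K) :
      (M.map (algebraMap K L)).map σ = M.map (algebraMap K L) := by
    ext; simp
  have hσE : E.map σ * A.map (algebraMap K L) = σ x • E.map σ := by
    rw [← map_algebraMap A, ← Matrix.map_mul, hE]
    ext; simp
  have hσF : A.map (algebraMap K L) * F.map σ = σ y • F.map σ := by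
    rw [← map_algebraMap A, ← Matrix.map_mul, hF]
    ext; simp
  have hTL (k : ℕ) : ∃ (m : ℕ) (B : Matrix ι ι L), (∀ i j, v (B i j) ≤ 1) ∧
      A.map (algebraMap K L) ^ m * T.map (algebraMap K L) = B * A.map (algebraMap K L) ^ k := by
    obtain ⟨m, B, hB, h⟩ := hT k
    refine ⟨m, B.map (algebraMap K L), hB, ?_⟩
    simpa only [map_mul, map_pow, RingHom.mapMatrix_apply] using
      congrArg (algebraMap K L).mapMatrix h
  have hconj : E.map σ * T.map (algebraMap K L) * F.map σ = 0 :=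
    mul_mul_eq_zero_of_valuation hTL (not_lt.1 hσx) hσy hσE hσF
  rw [← map_algebraMap T, ← Matrix.map_mul, ← Matrix.map_mul] at hconj
  exact Matrix.map_injective σ.injective (hconj.trans (Matrix.map_zero σ (map_zero σ)).symm)

theorem commute_of_valuation [Normal K L] [MulArchimedean Γ₀] {v : Valuation L Γ₀}
    (hirr : Irreducible A.charpoly) (hsep : A.charpoly.Separable)
    (hsplit : (A.charpoly.map (algebraMap K L)).Splits)
    (hcop : (Fintype.card ι).Coprime (A.charpoly.rootSet L ∩ {x | v x < 1}).ncard)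
    (hT : ∀ k : ℕ, ∃ (m : ℕ) (B : Matrix ι ι K),
      (∀ i j, v (algebraMap K L (B i j)) ≤ 1) ∧ A ^ m * T = B * A ^ k) :
    Commute T A := by
  classical
  have hchar : (A.map (algebraMap K L)).charpoly = A.charpoly.map (algebraMap K L) :=
    A.charpoly_map (algebraMap K L)
  have hmem {x : L} (hx : x ∈ (A.map (algebraMap K L)).charpoly.roots.toFinset) :
      x ∈ A.charpoly.rootSet L := by
    rwa [hchar] at hx
  rw [← ncard_rootSet_charpoly hsep hsplit] at hcop
  have hcomm : Commute (T.map (algebraMap K L)) (A.map (algebraMap K L)) :=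
    commute_of_forall_mul_mul_eq_zero
      (aeval_nodal_roots_charpoly (hchar ▸ hsep.map) (hchar ▸ hsplit))
      fun x hx y hy hxy E F hE hF =>
        mul_map_mul_eq_zero_of_valuation hirr hsplit hcop hT (hmem hx) (hmem hy) hxy hE hF
  refine Matrix.map_injective (algebraMap K L).injective ?_
  simpa only [Matrix.map_mul] using hcomm.eq

end Conjugates

section EndomorphismsOfGA

variable {n : ℕ} {A : Matrix (Fin n) (Fin n) ℤ}

theorem Aq_pow (A : Matrix (Fin n) (Fin n) ℤ) (k : ℕ) :
    Aq A ^ k = (A ^ k).map (Int.cast : ℤ → ℚ) :=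
  (map_pow (Int.castRingHom ℚ).mapMatrix A k).symm

theorem isUnit_det_Aq (hA : A.det ≠ 0) : IsUnit (Aq A).det := by
  rw [isUnit_iff_ne_zero, show (Aq A).det = A.det from (Int.cast_det A).symm]
  exact Int.cast_ne_zero.2 hA

theorem eventually_pow_mulVec_eq_intCast (hA : A.det ≠ 0) {v : Fin n → ℚ} (hv : v ∈ GA A) :
    ∀ᶠ m : ℕ in .atTop, ∃ y : Fin n → ℤ, Aq A ^ m *ᵥ v = fun i => (y i : ℚ) := by
  obtain ⟨k, x, rfl⟩ := hv
  filter_upwards [Filter.eventually_ge_atTop k.natAbs] with m hm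
  obtain ⟨l, hl⟩ := Int.eq_ofNat_of_zero_le (show 0 ≤ m + k by omega)
  have hpow : Aq A ^ m * Aq A ^ k = (A ^ l).map (Int.cast : ℤ → ℚ) := by
    rw [← Aq_pow, ← zpow_natCast, ← zpow_natCast, ← Matrix.zpow_add (isUnit_det_Aq hA), hl]
  refine ⟨A ^ l *ᵥ x, ?_⟩
  rw [Matrix.mulVec_mulVec, hpow]
  ext i
  simp [Matrix.mulVec, dotProduct]

theorem exists_pow_mul_eq_intCast_mul_pow (hA : A.det ≠ 0) {T : Matrix (Fin n) (Fin n) ℚ}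
    (hT : ∀ v ∈ GA A, T *ᵥ v ∈ GA A) (k : ℕ) :
    ∃ (m : ℕ) (B : Matrix (Fin n) (Fin n) ℤ),
      Aq A ^ m * T = B.map (Int.cast : ℤ → ℚ) * Aq A ^ k := by
  have hcol (j : Fin n) : (T * (Aq A ^ k)⁻¹).col j ∈ GA A := by
    have hmem : (Aq A ^ k)⁻¹ *ᵥ Pi.single j 1 ∈ GA A := by
      refine ⟨-k, Pi.single j 1, ?_⟩
      rw [Matrix.zpow_neg_natCast]
      congr 1
      ext i
      simp [Pi.single_apply]
    rw [← Matrix.mulVec_single_one, ← Matrix.mulVec_mulVec]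
    exact hT _ hmem
  obtain ⟨m, hm⟩ :=
    (Filter.eventually_all.2 fun j => eventually_pow_mulVec_eq_intCast hA (hcol j)).exists
  choose B hB using hm
  have hint : Aq A ^ m * (T * (Aq A ^ k)⁻¹) = (Matrix.of B)ᵀ.map (Int.cast : ℤ → ℚ) := by
    ext i j
    exact congrFun (hB j) i
  refine ⟨m, (Matrix.of B)ᵀ, ?_⟩
  have hdet : IsUnit (Aq A ^ k).det := by
    rw [Matrix.det_pow]
    exact (isUnit_det_Aq hA).pow k
  rw [← hint, Matrix.mul_assoc, Matrix.mul_assoc, Matrix.nonsing_inv_mul _ hdet, Matrix.mul_one]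

theorem tp_eq_ncard {L Γ₀ : Type*} [Field L] [CharZero L] [LinearOrderedCommGroupWithZero Γ₀]
    {v : Valuation L Γ₀} {p : ℕ} [Fact p.Prime] (hp : v p < 1)
    (hsep : (Aq A).charpoly.Separable)
    (hsplit : ((Aq A).charpoly.map (algebraMap ℚ L)).Splits) :
    tp A p = ((Aq A).charpoly.rootSet L ∩ {x | v x < 1}).ncard := by
  classical
  have hchar : (Aq A).charpoly.map (algebraMap ℚ L) = A.charpoly.map (algebraMap ℤ L) := by
    rw [show (Aq A).charpoly = _ from A.charpoly_map (Int.castRingHom ℚ), Polynomial.map_map]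
    exact congrArg A.charpoly.map (RingHom.ext_int _ _)
  have hnodup : (A.charpoly.aroots L).Nodup := nodup_roots (hchar ▸ hsep.map)
  have hset : (Aq A).charpoly.rootSet L ∩ {x | v x < 1} =
      ((A.charpoly.aroots L).filter fun x => v x < 1).toFinset := by
    ext x
    simp [rootSet, aroots, hchar]
  rw [hset, Set.ncard_coe_finset, Multiset.toFinset_card_of_nodup (hnodup.filter _),
    ← Multiset.countP_eq_card_filter]
  exact rootMultiplicity_zero_map_zmod_eq_countP hp A.charpoly_monic (hchar ▸ hsplit)

end EndomorphismsOfGA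

/-- every `T ∈ End(G_A)` commutes with `A`. -/
theorem stmt7 (n : ℕ) (A : Matrix (Fin n) (Fin n) ℤ) (hA : A.det ≠ 0)
    (hirr : Irreducible (A.charpoly.map (Int.castRingHom ℚ)))
    (hP' : (Pbad A).Nonempty)
    (hcop : ∃ p : ℕ, p.Prime ∧ Nat.gcd n (tp A p) = 1)
    (T : Matrix (Fin n) (Fin n) ℚ) (hT : ∀ v ∈ GA A, T *ᵥ v ∈ GA A) :
    T * Aq A = Aq A * T := by
  obtain ⟨p, hp, hcop⟩ := hcop
  have : Fact p.Prime := ⟨hp⟩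
  have hirr : Irreducible (Aq A).charpoly :=
    (A.charpoly_map (Int.castRingHom ℚ)).symm ▸ hirr
  let L := (Aq A).charpoly.SplittingField
  have : NumberField L := {}
  -- `Algebra ℚ L` elaborates to `DivisionRing.toRatAlgebra`, which instance search does not unfold.
  have : Normal ℚ L :=
    .of_isSplittingField (hFEp := IsSplittingField.splittingField _) (Aq A).charpoly
  have hsplit : ((Aq A).charpoly.map (algebraMap ℚ L)).Splits := SplittingField.splits _
  obtain ⟨v, hv⟩ := exists_valuation_lt_one L hp
  refine (commute_of_valuation (v := v) hirr hirr.separable hsplit ?_ fun k => ?_).eq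
  · rwa [Fintype.card_fin, ← tp_eq_ncard hv hirr.separable hsplit]
  · obtain ⟨m, B, hB⟩ := exists_pow_mul_eq_intCast_mul_pow hA hT k
    exact ⟨m, _, fun i j => (v.mem_valuationSubring_iff _).1 (intCast_mem _ (B i j)), hB⟩
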